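/- Let μ* := √3·(π/2 − arcsin(√(3/7))). If 0 < μ ≤ μ*, then F_{6,4}(u) ≥ 0 for every u ∈ H¹(ℝ) with ‖u‖₂² = μ, and for every ε > 0 there exists such u with F_{6,4}(u) < ε (so the constrained infimum equals 0). If μ > μ*, then for every M ∈ ℝ there exists u ∈ H¹(ℝ) with ‖u‖₂² = μ and F_{6,4}(u) < M (so the constrained infimum equals −∞). -/

import Mathlib

open MeasureTheory Real Set

noncomputable section

/-- `u ∈ H¹(ℝ)` with weak derivative `u'`: `u` is continuous, square-integrable,
`u'` is square-integrable, and `u(b) − u(a) = ∫_a^b u'(t) dt` for all `a ≤ b`. -/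
def IsH1 (u u' : ℝ → ℝ) : Prop :=
  Continuous u ∧ Integrable (fun x => (u x) ^ 2) ∧ Integrable (fun x => (u' x) ^ 2) ∧
    ∀ a b : ℝ, a ≤ b → u b - u a = ∫ t in a..b, u' t

/-- The mass `‖u‖₂² = ∫_ℝ u(x)² dx`. -/
def mass (u : ℝ → ℝ) : ℝ := ∫ x, (u x) ^ 2

/-- `D_q(u) = (1/2)∫ u'² − (1/q)|u(0)|^q`. -/
def Dfun (q : ℝ) (u u' : ℝ → ℝ) : ℝ :=
  (1 / 2) * (∫ x, (u' x) ^ 2) - (1 / q) * |u 0| ^ q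

/-- `F_{p,q}(u) = (1/2)∫ u'² − (1/p)∫ |u|^p − (1/q)|u(0)|^q`. -/
def Ffun (p q : ℝ) (u u' : ℝ → ℝ) : ℝ :=
  (1 / 2) * (∫ x, (u' x) ^ 2) - (1 / p) * (∫ x, |u x| ^ p) - (1 / q) * |u 0| ^ q

/-!
Let `θ' = -(2 / √3) u²`, so that the mass drives the phase `θ`. Adding the exact derivative of
`(√3 / 12) u⁴ cot θ` to `u'² / 2 - u⁶ / 6` completes a square, so the integral of the latter over
`[0, ∞)` is at least `(√3 / 12) u(0)⁴ cot α` for every `α` with `(2 / √3) ∫₀^∞ u² < α < π`.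
Doing this on both half-lines, with `cot α + cot β ≥ 2 cot ((α + β) / 2)` for `α + β ≤ π`, gives
the sharp inequality

  `½ ∫ u'² - ⅙ ∫ u⁶ ≥ (√3 / 6) cot (mass u / √3) u(0)⁴`,

with equality for two half-solitons glued at the origin. The critical mass is the one for which the
coefficient on the right equals `1 / 4`, the weight of the point interaction.

The dilations `u ↦ √l u(l ·)` preserve the mass and multiply `F_{6,4}` by `l²`, so the infimum is
`-∞` or `0` according to whether or not `F_{6,4}` takes negative values. Above the critical mass it
does: multiply the glued solitons, which have `F_{6,4} = 0`, by a constant larger than `1`.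
-/

open Filter Topology

section AbsoluteContinuity

variable {f g : ℝ → ℝ} {a b : ℝ}

theorem intervalIntegrable_of_absolutelyContinuous_of_ae_hasDerivAt
    (hf : AbsolutelyContinuousOnInterval f a b) (hg : ∀ᵐ x, x ∈ uIoc a b → HasDerivAt f (g x) x) :
    IntervalIntegrable g volume a b := by
  refine hf.intervalIntegrable_deriv.congr_ae ?_
  rw [EventuallyEq, ae_restrict_iff' measurableSet_uIoc]
  filter_upwards [hg] with x hx hxab using (hx hxab).deriv

theorem integral_eq_sub_of_absolutelyContinuous_of_ae_hasDerivAt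
    (hf : AbsolutelyContinuousOnInterval f a b) (hg : ∀ᵐ x, x ∈ uIoc a b → HasDerivAt f (g x) x) :
    ∫ x in a..b, g x = f b - f a := by
  rw [← hf.integral_deriv_eq_sub]
  refine intervalIntegral.integral_congr_ae ?_
  filter_upwards [hg] with x hx hxab using (hx hxab).deriv.symm

end AbsoluteContinuity

section Reflection

variable {f : ℝ → ℝ}

theorem integral_Ioi_zero_add_integral_Ioi_zero_comp_neg (hf : Integrable f) :
    (∫ x in Ioi 0, f x) + ∫ x in Ioi 0, f (-x) = ∫ x, f x := by
  rw [integral_comp_neg_Ioi 0 f, neg_zero, add_comm,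
    intervalIntegral.integral_Iic_add_Ioi hf.integrableOn hf.integrableOn]

theorem integrable_comp_abs_of_integrableOn_Ioi (hf : IntegrableOn f (Ioi 0)) :
    Integrable fun x => f |x| := by
  have := (integrable_fun_norm_addHaar (volume : Measure ℝ) (f := f)).2 (by simpa using hf)
  simpa using this

end Reflection

section Cotangent

variable {x y : ℝ}

theorem contDiffAt_cot {n : WithTop ℕ∞} (hx : sin x ≠ 0) : ContDiffAt ℝ n cot x := by
  rw [show cot = fun y => cos y / sin y from funext cot_eq_cos_div_sin]
  exact contDiff_cos.contDiffAt.div contDiff_sin.contDiffAt hx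

theorem contDiffOn_cot_comp {n : WithTop ℕ∞} {f : ℝ → ℝ} {s : Set ℝ} (hf : ContDiffOn ℝ n f s)
    (hs : ∀ x ∈ s, sin (f x) ≠ 0) : ContDiffOn ℝ n (fun x => cot (f x)) s :=
  fun x hx => (contDiffAt_cot (hs x hx)).comp_contDiffWithinAt x (hf x hx)

theorem hasDerivAt_cot (hx : sin x ≠ 0) : HasDerivAt cot (-(1 + cot x ^ 2)) x := by
  rw [show cot = fun y => cos y / sin y from funext cot_eq_cos_div_sin]
  refine ((hasDerivAt_cos x).fun_div (hasDerivAt_sin x) hx).congr_deriv ?_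
  field_simp
  ring

theorem two_mul_cot_half_add_le (hx : 0 < x) (hy : 0 < y) (hxy : x + y ≤ π) :
    2 * cot ((x + y) / 2) ≤ cot x + cot y := by
  set m := (x + y) / 2 with hm
  have sin_x_pos : 0 < sin x := sin_pos_of_pos_of_lt_pi hx (by linarith)
  have sin_y_pos : 0 < sin y := sin_pos_of_pos_of_lt_pi hy (by linarith)
  have sin_m_pos : 0 < sin m := sin_pos_of_pos_of_lt_pi (by linarith) (by linarith)
  have cos_m_nonneg : 0 ≤ cos m := cos_nonneg_of_mem_Icc ⟨by linarith, by linarith⟩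
  have cot_add_cot : cot x + cot y = 2 * sin m * cos m / (sin x * sin y) := by
    rw [← sin_two_mul, show 2 * m = x + y by rw [hm]; ring, sin_add, cot_eq_cos_div_sin,
      cot_eq_cos_div_sin]
    field_simp
    ring
  have sin_mul_sin_le : sin x * sin y ≤ sin m ^ 2 := by
    have two_mul_sin_mul_sin := Real.two_mul_sin_mul_sin x y
    have cos_add_eq : cos (x + y) = 1 - 2 * sin m ^ 2 := by
      rw [show x + y = 2 * m by rw [hm]; ring, cos_two_mul, cos_sq']
      ring
    linarith [cos_le_one (x - y)]
  calc 2 * cot m = 2 * sin m * cos m / sin m ^ 2 := by rw [cot_eq_cos_div_sin]; field_simp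
    _ ≤ 2 * sin m * cos m / (sin x * sin y) := by gcongr
    _ = cot x + cot y := cot_add_cot.symm

theorem le_cot_of_le_pi_div_two_sub_arctan (hx : 0 < x) (hxy : x ≤ π / 2 - arctan y) :
    y ≤ cot x := by
  have := strictMonoOn_tan.monotoneOn (arctan_mem_Ioo y)
    (show π / 2 - x ∈ Ioo (-(π / 2)) (π / 2) from
      ⟨by linarith [neg_pi_div_two_lt_arctan y], by linarith⟩) (by linarith)
  rwa [tan_arctan, tan_pi_div_two_sub, tan_inv_eq_cot] at this

end Cotangent

namespace IsH1

variable {u u' : ℝ → ℝ}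

theorem memLp (h : IsH1 u u') : MemLp u 2 :=
  (memLp_two_iff_integrable_sq h.1.aestronglyMeasurable).2 h.2.1

theorem sub_eq_integral (h : IsH1 u u') (a b : ℝ) : u b - u a = ∫ x in a..b, u' x := by
  rcases le_total a b with hab | hba
  · exact h.2.2.2 a b hab
  · rw [intervalIntegral.integral_symm, ← h.2.2.2 b a hba, neg_sub]

-- `IsH1` does not ask `u'` to be measurable, and the interval integral of a non-integrable
-- function is `0`: were `u'` not integrable near some point, `u` would be constant, hence zero.
theorem locallyIntegrable_deriv (h : IsH1 u u') (hm : mass u ≠ 0) : LocallyIntegrable u' := by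
  suffices hint : ∀ a b, IntervalIntegrable u' volume a b from fun x =>
    ⟨Ioc (x - 1) (x + 1), Ioc_mem_nhds (by linarith) (by linarith),
      (intervalIntegrable_iff_integrableOn_Ioc_of_le (by linarith)).1 (hint _ _)⟩
  by_contra! ⟨a, b, hab⟩
  have eq_of_not_integrable : ∀ x y, ¬ IntervalIntegrable u' volume x y → u y = u x :=
    fun x y hxy => sub_eq_zero.1 <| by
      rw [h.sub_eq_integral, intervalIntegral.integral_undef hxy]
  have u_const : ∀ x, u x = u a := fun x => by
    by_cases hax : IntervalIntegrable u' volume a x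
    · rw [← eq_of_not_integrable a b hab,
        eq_of_not_integrable x b fun hxb => hab (hax.trans hxb)]
    · exact eq_of_not_integrable a x hax
  have hsq : Integrable fun _ : ℝ => u a ^ 2 := by simpa only [u_const] using h.2.1
  have u_a_sq : u a ^ 2 = 0 := (integrable_const_iff.1 hsq).resolve_right fun hfin => by
    simp [isFiniteMeasure_iff] at hfin
  exact hm (by simp only [mass, u_const, u_a_sq, integral_zero])

theorem memLp_deriv (h : IsH1 u u') (hu' : LocallyIntegrable u') : MemLp u' 2 :=
  (memLp_two_iff_integrable_sq hu'.aestronglyMeasurable).2 h.2.2.1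

theorem absolutelyContinuousOnInterval (h : IsH1 u u') (hu' : LocallyIntegrable u') (a b : ℝ) :
    AbsolutelyContinuousOnInterval u a b := by
  have u_eq : u = fun x => u a + ∫ t in a..x, u' t := by
    funext x
    rw [← h.sub_eq_integral, add_sub_cancel]
  rw [u_eq]
  have hint : IntervalIntegrable u' volume a b :=
    (hu'.integrableOn_isCompact isCompact_uIcc).intervalIntegrable
  exact contDiff_const.contDiffOn.absolutelyContinuousOnInterval.fun_add
    (hint.absolutelyContinuousOnInterval_intervalIntegral left_mem_uIcc)

theorem ae_hasDerivAt (h : IsH1 u u') (hu' : LocallyIntegrable u') :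
    ∀ᵐ x, HasDerivAt u (u' x) x := by
  have u_eq : u = fun x => u 0 + ∫ t in 0..x, u' t := by
    funext x
    rw [← h.sub_eq_integral, add_sub_cancel]
  filter_upwards [LocallyIntegrable.ae_hasDerivAt_integral hu'] with x hx
  rw [u_eq]
  exact (hx 0).const_add (u 0)

theorem integrable_mul_deriv (h : IsH1 u u') (hu' : LocallyIntegrable u') :
    Integrable fun x => u x * u' x :=
  h.memLp.integrable_mul (h.memLp_deriv hu')

theorem sq_sub_sq_eq_integral (h : IsH1 u u') (hu' : LocallyIntegrable u') (a b : ℝ) :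
    u b ^ 2 - u a ^ 2 = ∫ x in a..b, 2 * (u x * u' x) := by
  have hac := h.absolutelyContinuousOnInterval hu' a b
  have hd : ∀ᵐ x, x ∈ uIoc a b → HasDerivAt (fun x => u x * u x) (2 * (u x * u' x)) x := by
    filter_upwards [h.ae_hasDerivAt hu'] with x hx _
    exact (hx.fun_mul hx).congr_deriv (by ring)
  rw [integral_eq_sub_of_absolutelyContinuous_of_ae_hasDerivAt (hac.fun_mul hac) hd]
  ring

theorem tendsto_atTop (h : IsH1 u u') (hu' : LocallyIntegrable u') : Tendsto u atTop (𝓝 0) := by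
  have sq_eq : (fun x => u x ^ 2) = fun x => u 0 ^ 2 + ∫ t in 0..x, 2 * (u t * u' t) := by
    funext x
    rw [← h.sq_sub_sq_eq_integral hu', add_sub_cancel]
  obtain ⟨l, hl⟩ : ∃ l, Tendsto (fun x => u x ^ 2) atTop (𝓝 l) := by
    rw [sq_eq]
    exact ⟨_, (intervalIntegral_tendsto_integral_Ioi 0
      ((h.integrable_mul_deriv hu').const_mul 2).integrableOn tendsto_id).const_add _⟩
  have volume_eq_top : ∀ s ∈ (atTop : Filter ℝ), volume s = ⊤ := fun s hs => by
    obtain ⟨b, hb⟩ := mem_atTop_sets.1 hs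
    exact top_le_iff.1 (volume_Ici (a := b) ▸ measure_mono hb)
  have l_eq : l = 0 := (h.2.1.integrableAtFilter atTop).eq_zero_of_tendsto volume_eq_top hl
  simpa [sqrt_sq_eq_abs, l_eq, tendsto_zero_iff_abs_tendsto_zero, Function.comp_def] using hl.sqrt

theorem sq_le_mass_add (h : IsH1 u u') (hu' : LocallyIntegrable u') (x : ℝ) :
    u x ^ 2 ≤ mass u + ∫ t, u' t ^ 2 := by
  have hlim : Tendsto (fun R => u x ^ 2 - u R ^ 2) atTop (𝓝 (u x ^ 2)) := by
    simpa using ((h.tendsto_atTop hu').pow 2).const_sub (u x ^ 2)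
  have hint : Integrable fun t => u t ^ 2 + u' t ^ 2 := h.2.1.add h.2.2.1
  refine le_of_tendsto hlim ?_
  filter_upwards [eventually_ge_atTop x] with R hR
  calc u x ^ 2 - u R ^ 2 = ∫ t in x..R, -(2 * (u t * u' t)) := by
        rw [intervalIntegral.integral_neg, ← h.sq_sub_sq_eq_integral hu', neg_sub]
    _ ≤ ∫ t in x..R, (u t ^ 2 + u' t ^ 2) :=
        intervalIntegral.integral_mono hR
          ((h.integrable_mul_deriv hu').const_mul 2).neg.intervalIntegrable
          hint.intervalIntegrable fun t => by linarith [sq_nonneg (u t + u' t)]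
    _ ≤ ∫ t, (u t ^ 2 + u' t ^ 2) := by
        rw [intervalIntegral.integral_of_le hR]
        exact setIntegral_le_integral hint (Eventually.of_forall fun t => by positivity)
    _ = mass u + ∫ t, u' t ^ 2 := integral_add h.2.1 h.2.2.1

theorem integrable_pow (h : IsH1 u u') (hu' : LocallyIntegrable u') {n : ℕ} (hn : 2 ≤ n) :
    Integrable fun x => u x ^ n := by
  obtain ⟨k, rfl⟩ := Nat.exists_eq_add_of_le' hn
  simp only [pow_add]
  refine h.2.1.bdd_mul (c := √(mass u + ∫ t, u' t ^ 2) ^ k)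
    (h.1.pow k).aestronglyMeasurable (Eventually.of_forall fun x => ?_)
  rw [norm_pow]
  exact pow_le_pow_left₀ (norm_nonneg _) (abs_le_sqrt (h.sq_le_mass_add hu' x)) k

theorem comp_neg (h : IsH1 u u') : IsH1 (fun x => u (-x)) fun x => -u' (-x) := by
  refine ⟨h.1.comp continuous_neg, h.2.1.comp_neg, ?_, fun a b _ => ?_⟩
  · simpa only [neg_sq] using h.2.2.1.comp_neg
  · rw [intervalIntegral.integral_neg, intervalIntegral.integral_comp_neg,
      ← h.sub_eq_integral, neg_sub]

theorem const_smul (h : IsH1 u u') (t : ℝ) : IsH1 (t • u) (t • u') := by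
  refine ⟨h.1.const_smul t, ?_, ?_, fun a b _ => ?_⟩
  · simpa only [Pi.smul_apply, smul_eq_mul, mul_pow] using h.2.1.const_mul (t ^ 2)
  · simpa only [Pi.smul_apply, smul_eq_mul, mul_pow] using h.2.2.1.const_mul (t ^ 2)
  · simp only [Pi.smul_apply, smul_eq_mul]
    rw [intervalIntegral.integral_const_mul, ← h.sub_eq_integral, mul_sub]

end IsH1

section SharpInequality

variable {u u' : ℝ → ℝ}

theorem IsH1.integrable_quintic_lagrangian (h : IsH1 u u') (hu' : LocallyIntegrable u') :
    Integrable fun x => 1 / 2 * u' x ^ 2 - 1 / 6 * u x ^ 6 :=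
  (h.2.2.1.const_mul _).sub ((h.integrable_pow hu' (by norm_num)).const_mul _)

-- Adding `((√3 / 12) u⁴ cot θ)'` to the integrand completes it to `(u' + (√3 / 3) u³ cot θ)² / 2`.
theorem IsH1.sub_le_integral_of_phase (h : IsH1 u u') (hu' : LocallyIntegrable u') {θ : ℝ → ℝ}
    (hθ : ∀ x, HasDerivAt θ (-(2 / √3 * u x ^ 2)) x) {a b : ℝ} (hab : a ≤ b)
    (hsin : ∀ x ∈ Icc a b, sin (θ x) ≠ 0) :
    √3 / 12 * (u a ^ 4 * cot (θ a)) - √3 / 12 * (u b ^ 4 * cot (θ b)) ≤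
      ∫ x in a..b, (1 / 2 * u' x ^ 2 - 1 / 6 * u x ^ 6) := by
  have sq_sqrt_three : √3 ^ 2 = 3 := sq_sqrt (by norm_num)
  set ψ : ℝ → ℝ := fun x => -(√3 / 12) * (u x * u x * (u x * u x) * cot (θ x))
  set ψ' : ℝ → ℝ := fun x => -(√3 / 3 * u x ^ 3 * u' x * cot (θ x) +
    1 / 6 * u x ^ 6 * (1 + cot (θ x) ^ 2)) with hψ'
  have hθC : ContDiff ℝ 1 θ := by
    have := h.1
    rw [contDiff_one_iff_deriv, funext fun x => (hθ x).deriv]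
    exact ⟨fun x => (hθ x).differentiableAt, by fun_prop⟩
  have hcot : AbsolutelyContinuousOnInterval (fun x => cot (θ x)) a b :=
    (contDiffOn_cot_comp hθC.contDiffOn
      fun x hx => hsin x (by rwa [uIcc_of_le hab] at hx)).absolutelyContinuousOnInterval
  have hu := h.absolutelyContinuousOnInterval hu' a b
  have hψac : AbsolutelyContinuousOnInterval ψ a b :=
    (((hu.fun_mul hu).fun_mul (hu.fun_mul hu)).fun_mul hcot).const_mul _
  have hψd : ∀ᵐ x, x ∈ uIoc a b → HasDerivAt ψ (ψ' x) x := by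
    filter_upwards [h.ae_hasDerivAt hu'] with x hx hxab
    have hsinx := hsin x (Ioc_subset_Icc_self (by rwa [uIoc_of_le hab] at hxab))
    refine ((((hx.fun_mul hx).fun_mul (hx.fun_mul hx)).fun_mul
      ((hasDerivAt_cot hsinx).comp x (hθ x))).const_mul (-(√3 / 12))).congr_deriv ?_
    simp only [hψ', Function.comp_apply]
    field_simp
    ring
  have ψ'_le : ∀ x, ψ' x ≤ 1 / 2 * u' x ^ 2 - 1 / 6 * u x ^ 6 := fun x => by
    have square : 1 / 2 * u' x ^ 2 - 1 / 6 * u x ^ 6 - ψ' x =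
        1 / 2 * (u' x + √3 / 3 * u x ^ 3 * cot (θ x)) ^ 2 := by
      simp only [hψ']
      linear_combination (-(u x ^ 6 * cot (θ x) ^ 2 / 18)) * sq_sqrt_three
    exact sub_nonneg.1 (square ▸ by positivity)
  calc √3 / 12 * (u a ^ 4 * cot (θ a)) - √3 / 12 * (u b ^ 4 * cot (θ b))
      = ∫ x in a..b, ψ' x := by
        rw [integral_eq_sub_of_absolutelyContinuous_of_ae_hasDerivAt hψac hψd]
        ring
    _ ≤ ∫ x in a..b, (1 / 2 * u' x ^ 2 - 1 / 6 * u x ^ 6) :=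
        intervalIntegral.integral_mono hab
          (intervalIntegrable_of_absolutelyContinuous_of_ae_hasDerivAt hψac hψd)
          (h.integrable_quintic_lagrangian hu').intervalIntegrable ψ'_le

theorem IsH1.le_integral_Ioi_of_mass_lt (h : IsH1 u u') (hu' : LocallyIntegrable u') {a α : ℝ}
    (hα : 2 / √3 * (∫ x in Ioi a, u x ^ 2) < α) (hαπ : α < π) :
    √3 / 12 * (u a ^ 4 * cot α) ≤ ∫ x in Ioi a, (1 / 2 * u' x ^ 2 - 1 / 6 * u x ^ 6) := by
  set m := ∫ x in Ioi a, u x ^ 2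
  set θ : ℝ → ℝ := fun x => α - 2 / √3 * ∫ t in a..x, u t ^ 2 with hθ
  have θ_deriv : ∀ x, HasDerivAt θ (-(2 / √3 * u x ^ 2)) x := fun x =>
    (((h.1.pow 2).integral_hasStrictDerivAt a x).hasDerivAt.const_mul _).const_sub α
  have θ_mem : ∀ x, a ≤ x → θ x ∈ Icc (α - 2 / √3 * m) α := fun x hx => by
    have hnonneg : 0 ≤ ∫ t in a..x, u t ^ 2 :=
      intervalIntegral.integral_nonneg hx fun t _ => sq_nonneg _
    have hle : ∫ t in a..x, u t ^ 2 ≤ m := by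
      rw [intervalIntegral.integral_of_le hx]
      exact setIntegral_mono_set h.2.1.integrableOn
        (Eventually.of_forall fun t => sq_nonneg _) Ioc_subset_Ioi_self.eventuallyLE
    exact ⟨by simp only [hθ]; gcongr, sub_le_self _ (by positivity)⟩
  have sin_pos : ∀ y ∈ Icc (α - 2 / √3 * m) α, 0 < sin y := fun y hy =>
    sin_pos_of_pos_of_lt_pi (by linarith [hy.1]) (by linarith [hy.2])
  have θ_tendsto : Tendsto θ atTop (𝓝 (α - 2 / √3 * m)) :=
    ((intervalIntegral_tendsto_integral_Ioi a h.2.1.integrableOn tendsto_id).const_mul _).const_sub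
      α
  have cot_tendsto : Tendsto (fun R => cot (θ R)) atTop (𝓝 (cot (α - 2 / √3 * m))) := by
    have hmem : α - 2 / √3 * m ∈ Icc (α - 2 / √3 * m) α :=
      left_mem_Icc.2 ((θ_mem a le_rfl).1.trans (θ_mem a le_rfl).2)
    exact (hasDerivAt_cot (sin_pos _ hmem).ne').continuousAt.tendsto.comp θ_tendsto
  have lhs_tendsto : Tendsto (fun R => √3 / 12 * (u a ^ 4 * cot (θ a)) -
      √3 / 12 * (u R ^ 4 * cot (θ R))) atTop (𝓝 (√3 / 12 * (u a ^ 4 * cot (θ a)))) := by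
    simpa using ((((h.tendsto_atTop hu').pow 4).mul cot_tendsto).const_mul (√3 / 12)).const_sub
      (√3 / 12 * (u a ^ 4 * cot (θ a)))
  have rhs_tendsto := intervalIntegral_tendsto_integral_Ioi a
    (h.integrable_quintic_lagrangian hu').integrableOn tendsto_id
  have θ_a : θ a = α := by simp [hθ]
  rw [← θ_a]
  refine le_of_tendsto_of_tendsto lhs_tendsto rhs_tendsto ?_
  filter_upwards [eventually_ge_atTop a] with R hR
  exact h.sub_le_integral_of_phase hu' θ_deriv hR fun x hx => (sin_pos _ (θ_mem x hx.1)).ne'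

theorem mass_comp_neg (u : ℝ → ℝ) : mass (fun x => u (-x)) = mass u :=
  integral_neg_eq_self (fun x => u x ^ 2) volume

theorem IsH1.le_integral_of_mass_lt (h : IsH1 u u') (hm : mass u ≠ 0) {γ : ℝ}
    (hγ : mass u / √3 < γ) (hγπ : γ ≤ π / 2) :
    √3 / 6 * cot γ * u 0 ^ 4 ≤ ∫ x, (1 / 2 * u' x ^ 2 - 1 / 6 * u x ^ 6) := by
  have hu' := h.locallyIntegrable_deriv hm
  set m₁ := ∫ x in Ioi (0 : ℝ), u x ^ 2
  set m₂ := ∫ x in Ioi (0 : ℝ), u (-x) ^ 2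
  have mass_eq : m₁ + m₂ = mass u := integral_Ioi_zero_add_integral_Ioi_zero_comp_neg h.2.1
  set δ := γ - mass u / √3 with hδ
  have hδ_pos : 0 < δ := sub_pos.2 hγ
  set α := 2 / √3 * m₁ + δ with hα
  set β := 2 / √3 * m₂ + δ with hβ
  have hα_pos : 0 < α :=
    add_pos_of_nonneg_of_pos
      (mul_nonneg (by positivity) (integral_nonneg fun x => sq_nonneg _)) hδ_pos
  have hβ_pos : 0 < β :=
    add_pos_of_nonneg_of_pos
      (mul_nonneg (by positivity) (integral_nonneg fun x => sq_nonneg _)) hδ_pos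
  have hαβ : α + β = 2 * γ := by
    rw [hα, hβ, hδ, ← mass_eq]
    ring
  have right_le := h.le_integral_Ioi_of_mass_lt hu' (a := 0) (lt_add_of_pos_right _ hδ_pos)
    (show α < π by linarith)
  have left_le := h.comp_neg.le_integral_Ioi_of_mass_lt (a := 0)
    (h.comp_neg.locallyIntegrable_deriv (by rwa [mass_comp_neg])) (lt_add_of_pos_right _ hδ_pos)
    (show β < π by linarith)
  have cot_le : 2 * cot γ ≤ cot α + cot β := by
    simpa [hαβ] using two_mul_cot_half_add_le hα_pos hβ_pos (by linarith)
  calc √3 / 6 * cot γ * u 0 ^ 4 = √3 / 12 * u 0 ^ 4 * (2 * cot γ) := by ring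
    _ ≤ √3 / 12 * u 0 ^ 4 * (cot α + cot β) := by gcongr
    _ = √3 / 12 * (u 0 ^ 4 * cot α) + √3 / 12 * (u (-0) ^ 4 * cot β) := by rw [neg_zero]; ring
    _ ≤ _ := add_le_add right_le left_le
    _ = ∫ x, (1 / 2 * u' x ^ 2 - 1 / 6 * u x ^ 6) := by
        simpa only [neg_sq] using integral_Ioi_zero_add_integral_Ioi_zero_comp_neg
          (h.integrable_quintic_lagrangian hu')

theorem IsH1.le_integral_of_mass_div_lt_pi_div_two (h : IsH1 u u') (hm : 0 < mass u)
    (hmπ : mass u / √3 < π / 2) :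
    √3 / 6 * cot (mass u / √3) * u 0 ^ 4 ≤ ∫ x, (1 / 2 * u' x ^ 2 - 1 / 6 * u x ^ 6) := by
  have hsin : 0 < sin (mass u / √3) :=
    sin_pos_of_pos_of_lt_pi (by positivity) (by linarith [pi_pos])
  have hlim : Tendsto (fun γ => √3 / 6 * cot γ * u 0 ^ 4) (𝓝[>] (mass u / √3))
      (𝓝 (√3 / 6 * cot (mass u / √3) * u 0 ^ 4)) :=
    (((hasDerivAt_cot hsin.ne').continuousAt.tendsto.const_mul _).mul_const _).mono_left
      nhdsWithin_le_nhds
  refine le_of_tendsto hlim ?_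
  filter_upwards [Ioo_mem_nhdsGT hmπ] with γ hγ
  exact h.le_integral_of_mass_lt hm.ne' hγ.1 hγ.2.le

theorem Ffun_six_four (u u' : ℝ → ℝ) :
    Ffun 6 4 u u' =
      1 / 2 * (∫ x, u' x ^ 2) - 1 / 6 * (∫ x, u x ^ 6) - 1 / 4 * u 0 ^ 4 := by
  have abs_rpow_six (y : ℝ) : |y| ^ (6 : ℝ) = y ^ 6 := by
    rw [← Even.pow_abs (by decide : Even 6)]
    exact_mod_cast rpow_natCast |y| 6
  have abs_rpow_four (y : ℝ) : |y| ^ (4 : ℝ) = y ^ 4 := by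
    rw [← Even.pow_abs (by decide : Even 4)]
    exact_mod_cast rpow_natCast |y| 4
  simp only [Ffun, abs_rpow_six, abs_rpow_four]

/-- The threshold `μ*` for the mass, at which `(√3 / 6) cot (μ* / √3) = 1 / 4`. -/
def criticalMass : ℝ := √3 * (π / 2 - arcsin √(3 / 7))

theorem criticalMass_eq : criticalMass = √3 * (π / 2 - arctan (√3 / 2)) := by
  have sqrt_one_sub : √(1 - √(3 / 7) ^ 2) = 2 / √7 := by
    rw [sq_sqrt (by positivity), show (1 - 3 / 7 : ℝ) = 2 ^ 2 / 7 by norm_num,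
      sqrt_div (by positivity), sqrt_sq (by positivity)]
  have sqrt_lt_one : √(3 / 7) < 1 := (sqrt_lt' one_pos).2 (by norm_num)
  rw [criticalMass, arcsin_eq_arctan ⟨by linarith [sqrt_nonneg (3 / 7)], sqrt_lt_one⟩, sqrt_one_sub,
    sqrt_div (by positivity)]
  field_simp

theorem criticalMass_pos : 0 < criticalMass := by
  rw [criticalMass_eq]
  have := arctan_lt_pi_div_two (√3 / 2)
  exact mul_pos (by positivity) (by linarith)

theorem Ffun_nonneg_of_mass_le_criticalMass (h : IsH1 u u') (hm : 0 < mass u)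
    (hle : mass u ≤ criticalMass) : 0 ≤ Ffun 6 4 u u' := by
  have hu' := h.locallyIntegrable_deriv hm.ne'
  have phase_le : mass u / √3 ≤ π / 2 - arctan (√3 / 2) := by
    rw [div_le_iff₀' (by positivity)]
    exact hle.trans_eq criticalMass_eq
  have sharp := h.le_integral_of_mass_div_lt_pi_div_two hm <|
    phase_le.trans_lt (sub_lt_self _ (arctan_pos.2 (by positivity)))
  have coeff_ge : 1 / 4 ≤ √3 / 6 * cot (mass u / √3) := calc
    1 / 4 = √3 / 6 * (√3 / 2) := by ring_nf; norm_num
    _ ≤ √3 / 6 * cot (mass u / √3) := by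
        gcongr
        exact le_cot_of_le_pi_div_two_sub_arctan (by positivity) phase_le
  rw [integral_sub (h.2.2.1.const_mul _) ((h.integrable_pow hu' (by norm_num)).const_mul _),
    integral_const_mul, integral_const_mul] at sharp
  rw [Ffun_six_four]
  linarith [mul_le_mul_of_nonneg_right coeff_ge (by positivity : 0 ≤ u 0 ^ 4)]

end SharpInequality

section Dilation

variable {u u' : ℝ → ℝ} {l : ℝ}

/-- The mass-preserving dilation `u ↦ √l u(l ·)`. -/
def dilate (l : ℝ) (u : ℝ → ℝ) : ℝ → ℝ := fun x => √l * u (l * x)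

theorem dilate_sq (hl : 0 ≤ l) (u : ℝ → ℝ) (x : ℝ) : dilate l u x ^ 2 = l * u (l * x) ^ 2 := by
  rw [dilate, mul_pow, sq_sqrt hl]

theorem abs_dilate_rpow (hl : 0 ≤ l) (u : ℝ → ℝ) (p x : ℝ) :
    |dilate l u x| ^ p = l ^ (p / 2) * |u (l * x)| ^ p := by
  rw [dilate, abs_mul, abs_of_nonneg (sqrt_nonneg l), mul_rpow (sqrt_nonneg l) (abs_nonneg _),
    sqrt_eq_rpow, ← rpow_mul hl, one_div_mul_eq_div]

theorem mass_dilate (hl : 0 < l) (u : ℝ → ℝ) : mass (dilate l u) = mass u := by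
  simp only [mass, dilate_sq hl.le]
  rw [integral_const_mul, Measure.integral_comp_mul_left (fun y => u y ^ 2),
    abs_of_pos (inv_pos.2 hl), smul_eq_mul, mul_inv_cancel_left₀ hl.ne']

theorem IsH1.dilate (h : IsH1 u u') (hl : 0 < l) : IsH1 (dilate l u) (l • dilate l u') := by
  refine ⟨continuous_const.mul (h.1.comp (continuous_const_mul l)), ?_, ?_, fun a b _ => ?_⟩
  · simp only [dilate_sq hl.le]
    exact (h.2.1.comp_mul_left' hl.ne').const_mul l
  · simp only [Pi.smul_apply, smul_eq_mul, mul_pow, dilate_sq hl.le]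
    exact ((h.2.2.1.comp_mul_left' hl.ne').const_mul l).const_mul (l ^ 2)
  · simp only [Pi.smul_apply, smul_eq_mul, _root_.dilate]
    rw [intervalIntegral.integral_const_mul, intervalIntegral.integral_const_mul, mul_left_comm,
      intervalIntegral.mul_integral_comp_mul_left, ← h.sub_eq_integral, mul_sub]

theorem Ffun_dilate (hl : 0 < l) (p q : ℝ) (u u' : ℝ → ℝ) :
    Ffun p q (dilate l u) (l • dilate l u') =
      l ^ 2 * (1 / 2 * ∫ x, u' x ^ 2) - l ^ (p / 2 - 1) * (1 / p * ∫ x, |u x| ^ p) -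
        l ^ (q / 2) * (1 / q * |u 0| ^ q) := by
  have kinetic : ∫ x, (l • dilate l u') x ^ 2 = l ^ 2 * ∫ x, u' x ^ 2 := by
    simp only [Pi.smul_apply, smul_eq_mul, mul_pow]
    rw [integral_const_mul]
    exact congrArg _ (mass_dilate hl u')
  have potential : ∫ x, |dilate l u x| ^ p = l ^ (p / 2 - 1) * ∫ x, |u x| ^ p := by
    simp only [abs_dilate_rpow hl.le]
    rw [integral_const_mul, Measure.integral_comp_mul_left (fun y => |u y| ^ p),
      abs_of_pos (inv_pos.2 hl), smul_eq_mul, rpow_sub_one hl.ne']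
    ring
  rw [Ffun, kinetic, potential, abs_dilate_rpow hl.le, mul_zero]
  ring

theorem Ffun_six_four_dilate (hl : 0 < l) (u u' : ℝ → ℝ) :
    Ffun 6 4 (dilate l u) (l • dilate l u') = l ^ 2 * Ffun 6 4 u u' := by
  rw [Ffun_dilate hl, Ffun, show (6 / 2 - 1 : ℝ) = 2 by norm_num, show (4 / 2 : ℝ) = 2 by norm_num,
    rpow_two]
  ring

theorem exists_Ffun_six_four_lt_of_pos (h : IsH1 u u') {ε : ℝ} (hε : 0 < ε) :
    ∃ v v', IsH1 v v' ∧ mass v = mass u ∧ Ffun 6 4 v v' < ε := by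
  obtain ⟨l, hl, hlt⟩ : ∃ l, 0 < l ∧ l ^ 2 * Ffun 6 4 u u' < ε := by
    have hlim : Tendsto (fun l => l ^ 2 * Ffun 6 4 u u') (𝓝[>] 0) (𝓝 0) := by
      have : Continuous fun l => l ^ 2 * Ffun 6 4 u u' := by fun_prop
      simpa using (this.tendsto 0).mono_left nhdsWithin_le_nhds
    exact (eventually_mem_nhdsWithin.and (hlim.eventually (gt_mem_nhds hε))).exists
  exact ⟨_, _, h.dilate hl, mass_dilate hl u, by rwa [Ffun_six_four_dilate hl]⟩

theorem exists_Ffun_six_four_lt_of_neg (h : IsH1 u u') (hneg : Ffun 6 4 u u' < 0) (M : ℝ) :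
    ∃ v v', IsH1 v v' ∧ mass v = mass u ∧ Ffun 6 4 v v' < M := by
  obtain ⟨l, hl, hlt⟩ : ∃ l, 0 < l ∧ l ^ 2 * Ffun 6 4 u u' < M :=
    ((eventually_gt_atTop 0).and (((tendsto_pow_atTop two_ne_zero).atTop_mul_const_of_neg
      hneg).eventually_lt_atBot M)).exists
  exact ⟨_, _, h.dilate hl, mass_dilate hl u, by rwa [Ffun_six_four_dilate hl]⟩

end Dilation

section Amplification

theorem mass_smul (t : ℝ) (u : ℝ → ℝ) : mass (t • u) = t ^ 2 * mass u := by
  simp only [mass, Pi.smul_apply, smul_eq_mul, mul_pow, integral_const_mul]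

theorem mass_sqrt_div_mass_smul {u : ℝ → ℝ} {μ : ℝ} (hμ : 0 ≤ μ) (hu : 0 < mass u) :
    mass (√(μ / mass u) • u) = μ := by
  rw [mass_smul, sq_sqrt (div_nonneg hμ hu.le), div_mul_cancel₀ _ hu.ne']

theorem Ffun_smul (t p q : ℝ) (u u' : ℝ → ℝ) :
    Ffun p q (t • u) (t • u') = t ^ 2 * (1 / 2 * ∫ x, u' x ^ 2) -
      |t| ^ p * (1 / p * ∫ x, |u x| ^ p) - |t| ^ q * (1 / q * |u 0| ^ q) := by
  simp only [Ffun, Pi.smul_apply, smul_eq_mul, mul_pow, abs_mul,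
    mul_rpow (abs_nonneg _) (abs_nonneg _), integral_const_mul]
  ring

theorem Ffun_smul_lt {t p q : ℝ} {u : ℝ → ℝ} (ht : 1 < t) (hp : 2 ≤ p) (hq : 2 < q)
    (hu : u 0 ≠ 0) (u' : ℝ → ℝ) : Ffun p q (t • u) (t • u') < t ^ 2 * Ffun p q u u' := by
  have potential_nonneg : 0 ≤ 1 / p * ∫ x, |u x| ^ p :=
    mul_nonneg (by positivity) (integral_nonneg fun x => by positivity)
  have point_pos : 0 < 1 / q * |u 0| ^ q := by positivity
  have sq_le : t ^ 2 ≤ t ^ p := by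
    rw [← rpow_two]
    exact rpow_le_rpow_of_exponent_le ht.le hp
  have sq_lt : t ^ 2 < t ^ q := by
    rw [← rpow_two]
    exact rpow_lt_rpow_of_exponent_lt ht hq
  rw [Ffun_smul, abs_of_pos (one_pos.trans ht), Ffun]
  linarith [mul_le_mul_of_nonneg_right sq_le potential_nonneg,
    mul_lt_mul_of_pos_right sq_lt point_pos]

end Amplification

section EvenReflection

variable {f f' : ℝ → ℝ}

theorem isH1_comp_abs (hf : ∀ y, HasDerivAt f (f' y) y) (hf' : Continuous f')
    (hint : IntegrableOn (fun y => f y ^ 2) (Ioi 0))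
    (hint' : IntegrableOn (fun y => f' y ^ 2) (Ioi 0)) :
    IsH1 (fun x => f |x|) fun x => if 0 ≤ x then f' |x| else -f' |x| := by
  have f_cont : Continuous f := continuous_iff_continuousAt.2 fun y => (hf y).continuousAt
  have sq_ite (x : ℝ) : (if 0 ≤ x then f' |x| else -f' |x|) ^ 2 = f' |x| ^ 2 := by
    split_ifs <;> ring
  refine ⟨f_cont.comp continuous_abs, integrable_comp_abs_of_integrableOn_Ioi hint, ?_,
    fun a b _ => ?_⟩
  · simp only [sq_ite]
    exact integrable_comp_abs_of_integrableOn_Ioi hint'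
  · have f'_abs_cont : Continuous fun x => f' |x| := hf'.comp continuous_abs
    refine (integral_eq_of_hasDerivAt_off_countable (fun x => f |x|) _ (countable_singleton 0)
      (f_cont.comp continuous_abs).continuousOn (fun x hx => ?_) ?_).symm
    · rcases lt_or_gt_of_ne (show x ≠ 0 from hx.2) with hx | hx
      · simpa [not_le.2 hx, Function.comp_def] using (hf |x|).comp x (hasDerivAt_abs_neg hx)
      · simpa [hx.le, Function.comp_def] using (hf |x|).comp x (hasDerivAt_abs_pos hx)
    · refine (f'_abs_cont.intervalIntegrable a b).mono_fun ?_ (Eventually.of_forall fun x => ?_)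
      · exact (Measurable.ite measurableSet_Ici f'_abs_cont.measurable
          f'_abs_cont.measurable.neg).aestronglyMeasurable
      · simp only [apply_ite norm, norm_neg, ite_self, le_refl]

end EvenReflection

section Soliton

theorem hasDerivAt_tanh (x : ℝ) : HasDerivAt tanh (1 - tanh x ^ 2) x := by
  rw [funext tanh_eq_sinh_div_cosh]
  refine ((hasDerivAt_sinh x).fun_div (hasDerivAt_cosh x) (cosh_pos x).ne').congr_deriv ?_
  field_simp

theorem tendsto_sinh_atTop : Tendsto sinh atTop atTop :=
  tendsto_atTop_mono' _ ((eventually_ge_atTop 0).mono fun _ hx => self_le_sinh_iff.2 hx) tendsto_id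

/-- The positive decaying solution of `s'' + s⁵ = s`, translated so that it peaks at `-k / 2`. -/
def soliton (k y : ℝ) : ℝ := √(√3 / cosh (2 * y + k))

/-- The derivative of `soliton k`. -/
def solitonDeriv (k y : ℝ) : ℝ := -(tanh (2 * y + k) * soliton k y)

theorem soliton_sq (k y : ℝ) : soliton k y ^ 2 = √3 / cosh (2 * y + k) :=
  sq_sqrt (by positivity)

theorem soliton_pos (k y : ℝ) : 0 < soliton k y := by
  unfold soliton
  positivity

theorem tanh_sq_eq_one_sub_soliton_pow_four (k y : ℝ) :
    tanh (2 * y + k) ^ 2 = 1 - soliton k y ^ 4 / 3 := by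
  rw [pow_mul (soliton k y) 2 2, soliton_sq, div_pow (√3), sq_sqrt (by norm_num),
    tanh_eq_sinh_div_cosh, div_pow, sinh_sq]
  field_simp

theorem solitonDeriv_sq (k y : ℝ) :
    solitonDeriv k y ^ 2 = soliton k y ^ 2 - soliton k y ^ 6 / 3 := by
  rw [solitonDeriv, neg_sq, mul_pow, tanh_sq_eq_one_sub_soliton_pow_four]
  ring

theorem hasDerivAt_two_mul_add (k y : ℝ) : HasDerivAt (fun y => 2 * y + k) 2 y := by
  simpa using ((hasDerivAt_id y).const_mul 2).add_const k

theorem hasDerivAt_soliton (k y : ℝ) : HasDerivAt (soliton k) (solitonDeriv k y) y := by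
  refine (((hasDerivAt_const y √3).fun_div (hasDerivAt_two_mul_add k y).cosh
    (cosh_pos _).ne').sqrt (by positivity)).congr_deriv ?_
  change _ / (2 * soliton k y) = _
  have := soliton_pos k y
  rw [solitonDeriv, tanh_eq_sinh_div_cosh, div_eq_iff (by positivity)]
  have hsq := soliton_sq k y
  field_simp at hsq ⊢
  linear_combination 2 * sinh (2 * y + k) * hsq

theorem hasDerivAt_solitonDeriv (k y : ℝ) :
    HasDerivAt (solitonDeriv k) (soliton k y - soliton k y ^ 5) y := by
  refine (((hasDerivAt_tanh _).comp y (hasDerivAt_two_mul_add k y)).fun_mul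
    (hasDerivAt_soliton k y)).fun_neg.congr_deriv ?_
  simp only [Function.comp_apply, solitonDeriv]
  linear_combination 3 * soliton k y * tanh_sq_eq_one_sub_soliton_pow_four k y

theorem continuous_soliton (k : ℝ) : Continuous (soliton k) :=
  continuous_iff_continuousAt.2 fun y => (hasDerivAt_soliton k y).continuousAt

theorem continuous_solitonDeriv (k : ℝ) : Continuous (solitonDeriv k) :=
  continuous_iff_continuousAt.2 fun y => (hasDerivAt_solitonDeriv k y).continuousAt

theorem hasDerivAt_arctan_sinh_eq_soliton_sq (k y : ℝ) :
    HasDerivAt (fun y => √3 / 2 * arctan (sinh (2 * y + k))) (soliton k y ^ 2) y := by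
  refine (((hasDerivAt_two_mul_add k y).sinh.arctan).const_mul _).congr_deriv ?_
  rw [soliton_sq, sinh_sq]
  field_simp
  ring

theorem tendsto_arctan_sinh (k : ℝ) :
    Tendsto (fun y => √3 / 2 * arctan (sinh (2 * y + k))) atTop (𝓝 (√3 / 2 * (π / 2))) := by
  have hlin : Tendsto (fun y => 2 * y + k) atTop atTop :=
    tendsto_atTop_add_const_right _ _ (tendsto_id.const_mul_atTop two_pos)
  exact ((tendsto_nhds_of_tendsto_nhdsWithin tendsto_arctan_atTop).comp
    (tendsto_sinh_atTop.comp hlin)).const_mul _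

theorem integrableOn_soliton_sq (k : ℝ) : IntegrableOn (fun y => soliton k y ^ 2) (Ioi 0) :=
  integrableOn_Ioi_deriv_of_nonneg' (fun y _ => hasDerivAt_arctan_sinh_eq_soliton_sq k y)
    (fun _ _ => sq_nonneg _) (tendsto_arctan_sinh k)

theorem integral_soliton_sq (k : ℝ) :
    ∫ y in Ioi 0, soliton k y ^ 2 = √3 / 2 * (π / 2 - arctan (sinh k)) := by
  rw [integral_Ioi_of_hasDerivAt_of_tendsto'
    (fun y _ => hasDerivAt_arctan_sinh_eq_soliton_sq k y) (integrableOn_soliton_sq k)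
    (tendsto_arctan_sinh k), mul_zero, zero_add]
  ring

theorem solitonDeriv_sq_le (k y : ℝ) : solitonDeriv k y ^ 2 ≤ soliton k y ^ 2 := by
  have := soliton_pos k y
  rw [solitonDeriv_sq]
  exact sub_le_self _ (by positivity)

theorem integrableOn_solitonDeriv_sq (k : ℝ) :
    IntegrableOn (fun y => solitonDeriv k y ^ 2) (Ioi 0) :=
  (integrableOn_soliton_sq k).mono' ((continuous_solitonDeriv k).pow 2).aestronglyMeasurable
    (Eventually.of_forall fun y => (norm_of_nonneg (sq_nonneg _)).trans_le (solitonDeriv_sq_le k y))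

theorem integrableOn_soliton_pow_six (k : ℝ) :
    IntegrableOn (fun y => soliton k y ^ 6) (Ioi 0) :=
  (((integrableOn_soliton_sq k).sub (integrableOn_solitonDeriv_sq k)).const_mul 3).congr <|
    Eventually.of_forall fun y => by
      simp only [Pi.sub_apply, solitonDeriv_sq]
      ring

theorem integrableOn_soliton_mul_solitonDeriv (k : ℝ) :
    IntegrableOn (fun y => soliton k y * solitonDeriv k y) (Ioi 0) :=
  (integrableOn_soliton_sq k).mono'
    ((continuous_soliton k).mul (continuous_solitonDeriv k)).aestronglyMeasurable
    (Eventually.of_forall fun y => by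
      rw [norm_mul, sq, norm_of_nonneg (soliton_pos k y).le]
      exact mul_le_mul_of_nonneg_left (abs_le_of_sq_le_sq (solitonDeriv_sq_le k y)
        (soliton_pos k y).le) (soliton_pos k y).le)

theorem integral_soliton_lagrangian (k : ℝ) :
    ∫ y in Ioi 0, (1 / 2 * solitonDeriv k y ^ 2 - 1 / 6 * soliton k y ^ 6) =
      √3 / 12 * sinh k * soliton k 0 ^ 4 := by
  have hderiv (y : ℝ) : HasDerivAt (fun y => 1 / 4 * (soliton k y * solitonDeriv k y))
      (1 / 2 * solitonDeriv k y ^ 2 - 1 / 6 * soliton k y ^ 6) y := by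
    refine (((hasDerivAt_soliton k y).fun_mul (hasDerivAt_solitonDeriv k y)).const_mul
      (1 / 4)).congr_deriv ?_
    linear_combination (-1 / 4) * solitonDeriv_sq k y
  have hint := ((integrableOn_solitonDeriv_sq k).const_mul (1 / 2)).sub
    ((integrableOn_soliton_pow_six k).const_mul (1 / 6))
  have hlim := tendsto_zero_of_hasDerivAt_of_integrableOn_Ioi (fun y _ => hderiv y) hint
    ((integrableOn_soliton_mul_solitonDeriv k).const_mul (1 / 4))
  rw [integral_Ioi_of_hasDerivAt_of_tendsto' (fun y _ => hderiv y) hint hlim, solitonDeriv,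
    tanh_eq_sinh_div_cosh]
  have hsq := soliton_sq k 0
  simp only [mul_zero, zero_add] at hsq ⊢
  linear_combination (-√3 / 12 * sinh k * soliton k 0 ^ 2) * hsq -
    (sinh k * soliton k 0 ^ 2 / cosh k / 12) * sq_sqrt (show (0 : ℝ) ≤ 3 by norm_num)

end Soliton

section CuspSoliton

/-- Two copies of the half-soliton `soliton k` on `[0, ∞)`, glued at the origin. -/
def cuspSoliton (k x : ℝ) : ℝ := soliton k |x|

/-- The weak derivative of `cuspSoliton k`. -/
def cuspSolitonDeriv (k x : ℝ) : ℝ := if 0 ≤ x then solitonDeriv k |x| else -solitonDeriv k |x|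

theorem isH1_cuspSoliton (k : ℝ) : IsH1 (cuspSoliton k) (cuspSolitonDeriv k) :=
  isH1_comp_abs (hasDerivAt_soliton k) (continuous_solitonDeriv k) (integrableOn_soliton_sq k)
    (integrableOn_solitonDeriv_sq k)

theorem mass_cuspSoliton (k : ℝ) : mass (cuspSoliton k) = √3 * (π / 2 - arctan (sinh k)) := by
  simp only [mass, cuspSoliton]
  rw [integral_comp_abs (f := fun y => soliton k y ^ 2), integral_soliton_sq]
  ring

theorem Ffun_six_four_cuspSoliton (k : ℝ) :
    Ffun 6 4 (cuspSoliton k) (cuspSolitonDeriv k) =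
      (√3 / 6 * sinh k - 1 / 4) * cuspSoliton k 0 ^ 4 := by
  have hsq (x : ℝ) : cuspSolitonDeriv k x ^ 2 = solitonDeriv k |x| ^ 2 := by
    unfold cuspSolitonDeriv
    split_ifs <;> ring
  have lagrangian := integral_soliton_lagrangian k
  rw [integral_sub ((integrableOn_solitonDeriv_sq k).const_mul _)
    ((integrableOn_soliton_pow_six k).const_mul _), integral_const_mul, integral_const_mul]
    at lagrangian
  simp only [Ffun_six_four, hsq, cuspSoliton, abs_zero]
  rw [integral_comp_abs (f := fun y => solitonDeriv k y ^ 2),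
    integral_comp_abs (f := fun y => soliton k y ^ 6)]
  linear_combination 2 * lagrangian

theorem exists_isH1_mass_eq_criticalMass :
    ∃ w w', IsH1 w w' ∧ mass w = criticalMass ∧ Ffun 6 4 w w' = 0 ∧ w 0 ≠ 0 := by
  refine ⟨_, _, isH1_cuspSoliton (arsinh (√3 / 2)), ?_, ?_, (soliton_pos _ _).ne'⟩
  · rw [mass_cuspSoliton, sinh_arsinh, criticalMass_eq]
  · have coeff_eq : √3 / 6 * (√3 / 2) = 1 / 4 := by
      ring_nf
      norm_num
    rw [Ffun_six_four_cuspSoliton, sinh_arsinh, coeff_eq, sub_self, zero_mul]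

theorem exists_isH1_mass_eq {μ : ℝ} (hμ : 0 ≤ μ) : ∃ u u', IsH1 u u' ∧ mass u = μ := by
  obtain ⟨w, w', hw, hmass, -, -⟩ := exists_isH1_mass_eq_criticalMass
  exact ⟨_, _, hw.const_smul _, mass_sqrt_div_mass_smul hμ (hmass ▸ criticalMass_pos)⟩

theorem exists_Ffun_six_four_neg_of_criticalMass_lt {μ : ℝ} (hμ : criticalMass < μ) :
    ∃ u u', IsH1 u u' ∧ mass u = μ ∧ Ffun 6 4 u u' < 0 := by
  obtain ⟨w, w', hw, hmass, hF, hw₀⟩ := exists_isH1_mass_eq_criticalMass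
  have mass_pos : 0 < mass w := hmass ▸ criticalMass_pos
  have mass_lt : mass w < μ := hmass.trans_lt hμ
  have one_lt : 1 < √(μ / mass w) := by rwa [lt_sqrt zero_le_one, one_pow, one_lt_div mass_pos]
  refine ⟨_, _, hw.const_smul _, mass_sqrt_div_mass_smul (mass_pos.trans mass_lt).le mass_pos, ?_⟩
  simpa only [hF, mul_zero] using Ffun_smul_lt one_lt (by norm_num : (2 : ℝ) ≤ 6)
    (by norm_num : (2 : ℝ) < 4) hw₀ w'

end CuspSoliton

theorem stmt13 (μ : ℝ) (hμ : 0 < μ) :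
    (μ ≤ Real.sqrt 3 * (Real.pi / 2 - Real.arcsin (Real.sqrt (3 / 7))) →
      (∀ u u' : ℝ → ℝ, IsH1 u u' → mass u = μ → 0 ≤ Ffun 6 4 u u') ∧
      (∀ ε : ℝ, 0 < ε →
        ∃ u u' : ℝ → ℝ, IsH1 u u' ∧ mass u = μ ∧ Ffun 6 4 u u' < ε)) ∧
    (Real.sqrt 3 * (Real.pi / 2 - Real.arcsin (Real.sqrt (3 / 7))) < μ →
      ∀ M : ℝ, ∃ u u' : ℝ → ℝ, IsH1 u u' ∧ mass u = μ ∧ Ffun 6 4 u u' < M) := by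
  rw [← criticalMass]
  refine ⟨fun hle => ⟨fun u u' h hm => ?_, fun ε hε => ?_⟩, fun hlt M => ?_⟩
  · exact Ffun_nonneg_of_mass_le_criticalMass h (hm ▸ hμ) (hm ▸ hle)
  · obtain ⟨u, u', h, rfl⟩ := exists_isH1_mass_eq hμ.le
    exact exists_Ffun_six_four_lt_of_pos h hε
  · obtain ⟨u, u', h, rfl, hneg⟩ := exists_Ffun_six_four_neg_of_criticalMass_lt hlt
    exact exists_Ffun_six_four_lt_of_neg h hneg M
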